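/- Let k ≥ 1 be an integer and n = 2k + 3. Consider all bijections assigning to the labels a_1, a_2, a_3, b_1, …, b_{2k} pairwise distinct values in ℤ/n such that each of the three cyclic intervals of elements strictly between consecutive values of the a's — from a_1 to a_2, from a_2 to a_3, and from a_3 to a_1, each taken in the positive cyclic direction — contains at most k elements of ℤ/n. The number of such bijections is (2k+3)·(k+1)·(k+2)·(2k)!/2, and the sum over all of them of sgn_c(a_1, a_2, a_3, b_1, …, b_{2k}) · Σ_{i=1}^{3} sgn_c(a_i, b_1, …, b_{2k}) equals −(3/2)·(2k+3)·(k+1)·(2k)! if k is odd, and (3/2)·(2k+3)·(k+2)·(2k)! if k is even; equivalently, the average value of the summand is −3/(k+2) for k odd and 3/(k+1) for k even. -/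

import Mathlib

/-!
Every admissible enumeration has `a₁, a₂, a₃` in positive cyclic order, with gaps `g₁, g₂, g₃ ≤ k`
of total size `2k` (`gap_iff`). The cyclic sign of a tuple of odd length is the sign of the
Vandermonde product of any lift of the tuple to `ℤ` contained in a window of length `n`
(`cycSign_eq`): replacing one such lift by another changes an even number of the factors' signs.
Lifting with `a₁` as the smallest element and cancelling the factors that `(a₁,a₂,a₃,b…)` and
`(a_i,b…)` have in common leaves only signs of differences `b - a`, whose product is read off from
the number of `b`s below `a₂` and below `a₃`. The summand thus equals
`(-1)^g₁ + (-1)^g₂ + (-1)^g₃` (`summand_eq`).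

Each admissible triple `(a₁,a₂,a₃)` extends to `(2k)!` enumerations (`sum_bijective`), the choice
of `a₁` contributes a factor `n = 2k+3`, and a given first gap `g ≤ k` occurs for `g + 1` choices
of the remaining gaps (`sum_admissible`). What is left are the elementary sums `∑ (g + 1)` and
`∑ (-1)^g (g + 1)`.
-/

/-- A tuple of elements of `ZMod n` is *in cyclic order* if it admits integer
representatives `y 0 < y 1 < ⋯ < y (m-1) < y 0 + n`. -/
def InCyclicOrder (n : ℕ) {m : ℕ} (x : Fin m → ZMod n) : Prop :=
  ∃ y : Fin m → ℤ, StrictMono y ∧ (∀ i, ((y i : ℤ) : ZMod n) = x i) ∧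
    ∀ i j, y i < y j + (n : ℤ)

open Classical in
/-- The cyclic sign of a tuple of elements of `ZMod n`: it is `0` if the entries
are not pairwise distinct, and otherwise the sign of any permutation `σ` putting
the tuple in cyclic order (well defined for tuples of odd length). -/
noncomputable def cycSign (n : ℕ) {m : ℕ} (x : Fin m → ZMod n) : ℤ :=
  if h : ∃ σ : Equiv.Perm (Fin m), InCyclicOrder n (x ∘ σ) then
    ((Equiv.Perm.sign h.choose : ℤˣ) : ℤ)
  else 0

/-- From an enumeration `e = (a₁, a₂, a₃, b₁, …, b_{2k})` of `ℤ/(2k+3)` and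
`i ∈ {0,1,2}`, the `(2k+1)`-tuple `(a_{i+1}, b₁, …, b_{2k})`. -/
def aTuple (k : ℕ) (e : Fin (2 * k + 3) → ZMod (2 * k + 3)) (i : Fin 3) :
    Fin (2 * k + 1) → ZMod (2 * k + 3) :=
  fun j =>
    if (j : ℕ) = 0 then e ⟨(i : ℕ), by have := i.isLt; omega⟩
    else e ⟨(j : ℕ) + 2, by have := j.isLt; omega⟩

open Classical in
/-- The number of elements of `ℤ/(2k+3)` strictly between `u` and `v` in the
positive cyclic direction. -/
noncomputable def gapCard (k : ℕ) (u v : ZMod (2 * k + 3)) : ℕ :=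
  (Finset.univ.filter fun z : ZMod (2 * k + 3) =>
    InCyclicOrder (2 * k + 3) ![u, z, v]).card

lemma fin_two_ne_zero (m : ℕ) : (2 : Fin (m + 3)) ≠ 0 := by
  rw [Ne, Fin.ext_iff]
  simp [Nat.mod_eq_of_lt]

/-- The sign of the Vandermonde product `∏_{i<j} (v j - v i)`, i.e. the sign of the
permutation sorting `v` when `v` is injective. -/
def altSign {m : ℕ} (v : Fin m → ℤ) : ℤ :=
  (∏ i, ∏ j ∈ Finset.Ioi i, (v j - v i)).sign

lemma sign_prod {ι : Type*} (s : Finset ι) (f : ι → ℤ) :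
    (∏ i ∈ s, f i).sign = ∏ i ∈ s, (f i).sign := by
  classical
  induction s using Finset.induction_on with
  | empty => simp
  | insert a s ha ih => rw [Finset.prod_insert ha, Finset.prod_insert ha, Int.sign_mul, ih]

lemma altSign_succ {m : ℕ} (v : Fin (m + 1) → ℤ) :
    altSign v = (∏ j : Fin m, (v j.succ - v 0).sign) * altSign (fun j => v j.succ) := by
  unfold altSign
  rw [Fin.prod_univ_succ, Int.sign_mul, Fin.prod_Ioi_zero, sign_prod]
  simp only [Fin.prod_Ioi_succ]

lemma altSign_perm {m : ℕ} (v : Fin m → ℤ) (σ : Equiv.Perm (Fin m)) :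
    altSign (v ∘ σ) = (Equiv.Perm.sign σ : ℤ) * altSign v := by
  unfold altSign
  have h1 := Matrix.det_vandermonde (v ∘ σ)
  have h2 := Matrix.det_permute σ (Matrix.vandermonde v)
  have h3 : Matrix.vandermonde (v ∘ σ) = (Matrix.vandermonde v).submatrix σ id := by
    ext i j; simp [Matrix.vandermonde_apply]
  rw [← h1, h3, h2, Matrix.det_vandermonde, Int.sign_mul]
  congr 1
  rcases Int.units_eq_one_or (Equiv.Perm.sign σ) with h | h <;> simp [h]

lemma altSign_mul_self {m : ℕ} (v : Fin m → ℤ) (hv : Function.Injective v) :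
    altSign v * altSign v = 1 := by
  have h : altSign v ≠ 0 := by
    unfold altSign
    rw [Ne, Int.sign_eq_zero_iff_zero, Finset.prod_eq_zero_iff]
    rintro ⟨i, -, hi⟩
    rw [Finset.prod_eq_zero_iff] at hi
    obtain ⟨j, hj, hij⟩ := hi
    have := hv (sub_eq_zero.1 hij)
    simp [this] at hj
  unfold altSign at h ⊢
  rw [Ne, Int.sign_eq_zero_iff_zero] at h
  rcases lt_or_gt_of_ne h with h | h
  · rw [Int.sign_eq_neg_one_of_neg h]; rfl
  · rw [Int.sign_eq_one_of_pos h]; rfl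

lemma prod_pairs_mul {m : ℕ} (e : Fin m → ℤ) :
    (∏ i, ∏ j ∈ Finset.Ioi i, (e i * e j)) * ∏ i, e i = (∏ i, e i) ^ m := by
  induction m with
  | zero => simp
  | succ m ih =>
    rw [Fin.prod_univ_succ, Fin.prod_Ioi_zero]
    simp only [Fin.prod_Ioi_succ]
    rw [Fin.prod_univ_succ (f := e), Finset.prod_mul_distrib, mul_pow, pow_succ (∏ i : Fin m, e i.succ),
      ← ih (fun i => e i.succ)]
    simp only [Finset.prod_const, Finset.card_univ, Fintype.card_fin]
    ring

/-- Two lifts of the same tuple, both contained in windows of length `n`, differ by `n • q`;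
comparing with an increasing lift `y`, the pair `i < j` is inverted by `v` exactly when
`q i + q j` is odd, so the inversions cancel when the length is odd. -/
lemma altSign_eq_one {m : ℕ} (hm : Odd m) (n : ℕ) (y v q : Fin m → ℤ)
    (hy : StrictMono y) (hyw : ∀ i j, y i < y j + n) (hvw : ∀ i j, v i < v j + n)
    (hq : ∀ i, y i = v i + n * q i) : altSign v = 1 := by
  have key : altSign v
      = ∏ i, ∏ j ∈ Finset.Ioi i, (((q i).negOnePow : ℤ) * ((q j).negOnePow : ℤ)) := by
    unfold altSign
    rw [sign_prod]
    refine Finset.prod_congr rfl fun i _ => ?_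
    rw [sign_prod]
    refine Finset.prod_congr rfl fun j hj => ?_
    have hij : i < j := by simpa using hj
    have h1 := hy hij
    have h2 := hyw j i
    have h3 := hvw i j
    have h4 := hvw j i
    have h5 := hq i
    have h6 := hq j
    have hn : (0 : ℤ) < n := by linarith
    have h7 : q j - q i < 2 := by
      by_contra hc
      have : (n : ℤ) * 2 ≤ n * (q j - q i) := mul_le_mul_of_nonneg_left (by linarith) hn.le
      linarith
    have h8 : -1 < q j - q i := by
      by_contra hc
      have : (n : ℤ) * (q j - q i) ≤ n * (-1) := mul_le_mul_of_nonneg_left (by linarith) hn.le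
      linarith
    have h9 : q j = q i ∨ q j = q i + 1 := by omega
    rcases h9 with h | h
    · rw [h] at h6 ⊢
      rw [Int.sign_eq_one_of_pos (by linarith)]
      rw [← Units.val_mul, Int.units_mul_self]; rfl
    · rw [h] at h6 ⊢
      rw [Int.sign_eq_neg_one_of_neg (by linarith), Int.negOnePow_succ]
      rw [← Units.val_mul, mul_neg, Int.units_mul_self]; rfl
  have h := prod_pairs_mul (fun i => ((q i).negOnePow : ℤ))
  rw [← key] at h
  have hE : ∃ u : ℤˣ, (∏ i, ((q i).negOnePow : ℤ)) = u := ⟨∏ i, (q i).negOnePow, by simp⟩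
  obtain ⟨u, hu⟩ := hE
  rw [hu] at h
  rcases Int.units_eq_one_or u with h' | h'
  · simpa [h'] using h
  · rw [h'] at h
    simp [hm.neg_one_pow] at h
    linarith

/-- The cyclic sign may be computed from any lift to `ℤ` lying in a window of length `n`. -/
lemma cycSign_eq {m : ℕ} (hm : Odd m) (n : ℕ) (x : Fin m → ZMod n) (v : Fin m → ℤ)
    (hx : ∀ i, ((v i : ℤ) : ZMod n) = x i) (hvw : ∀ i j, v i < v j + n)
    (hv : Function.Injective v) : cycSign n x = altSign v := by
  have hex : ∃ σ : Equiv.Perm (Fin m), InCyclicOrder n (x ∘ σ) := by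
    refine ⟨Tuple.sort v, v ∘ Tuple.sort v, ?_, fun i => hx _, fun i j => hvw _ _⟩
    exact (Tuple.monotone_sort v).strictMono_of_injective (hv.comp (Equiv.injective _))
  unfold cycSign
  rw [dif_pos hex]
  obtain ⟨y, hy, hyx, hyw⟩ := hex.choose_spec
  generalize hex.choose = σ at *
  have hq : ∀ i, ∃ q : ℤ, y i = (v ∘ σ) i + n * q := by
    intro i
    have : ((v (σ i) : ℤ) : ZMod n) = ((y i : ℤ) : ZMod n) := by
      rw [hx, hyx]; rfl
    rw [ZMod.intCast_eq_intCast_iff_dvd_sub] at this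
    obtain ⟨c, hc⟩ := this
    exact ⟨c, by simp only [Function.comp_apply]; linarith⟩
  choose q hq using hq
  have h := altSign_eq_one hm n y (v ∘ σ) q hy hyw (fun i j => hvw _ _) hq
  rw [altSign_perm] at h
  rcases Int.units_eq_one_or (Equiv.Perm.sign σ) with h' | h' <;> rw [h'] at h ⊢ <;> simp at h ⊢
  · exact h.symm
  · linarith

lemma inCyclicOrder_three_iff (n : ℕ) [NeZero n] (u z v : ZMod n) :
    InCyclicOrder n ![u, z, v] ↔ 0 < (z - u).val ∧ (z - u).val < (v - u).val := by
  have hn : (0 : ℤ) < n := by exact_mod_cast Nat.pos_of_ne_zero (NeZero.ne n)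
  constructor
  · rintro ⟨y, hy, hyx, hyw⟩
    have h01 : y 0 < y 1 := hy (by decide)
    have h12 : y 1 < y 2 := hy (by decide)
    have h20 := hyw 2 0
    have e0 : ((y 0 : ℤ) : ZMod n) = u := hyx 0
    have e1 : ((y 1 : ℤ) : ZMod n) = z := hyx 1
    have e2 : ((y 2 : ℤ) : ZMod n) = v := hyx 2
    have a1 : ((z - u).val : ℤ) = y 1 - y 0 := by
      rw [← e0, ← e1, ← Int.cast_sub, ZMod.val_intCast]
      exact Int.emod_eq_of_lt (by linarith) (by linarith)
    have a2 : ((v - u).val : ℤ) = y 2 - y 0 := by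
      rw [← e0, ← e2, ← Int.cast_sub, ZMod.val_intCast]
      exact Int.emod_eq_of_lt (by linarith) (by linarith)
    omega
  · rintro ⟨h1, h2⟩
    have h3 := ZMod.val_lt (v - u)
    refine ⟨![(u.val : ℤ), u.val + (z - u).val, u.val + (v - u).val], ?_, ?_, ?_⟩
    · rw [Fin.strictMono_iff_lt_succ]
      intro i
      fin_cases i
      · change (u.val : ℤ) < u.val + (z - u).val
        omega
      · change (u.val : ℤ) + (z - u).val < u.val + (v - u).val
        omega
    · intro i
      fin_cases i <;> simp
    · intro i j
      fin_cases i <;> fin_cases j <;> simp [-ZMod.natCast_val] <;> omega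

lemma gapCard_eq (k : ℕ) (u v : ZMod (2 * k + 3)) : gapCard k u v = (v - u).val - 1 := by
  classical
  unfold gapCard
  have h3 := ZMod.val_lt (v - u)
  have : (Finset.univ.filter fun z : ZMod (2 * k + 3) => InCyclicOrder (2 * k + 3) ![u, z, v]).card
      = (Finset.Ioo 0 (v - u).val).card := by
    refine Finset.card_bij (fun z _ => (z - u).val) ?_ ?_ ?_
    · intro z hz
      simpa [inCyclicOrder_three_iff] using hz
    · intro z _ z' _ h
      have := ZMod.val_injective _ h
      simpa using this
    · intro t ht
      rw [Finset.mem_Ioo] at ht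
      have hval : (((t : ZMod (2 * k + 3)) + u) - u).val = t := by
        rw [add_sub_cancel_right, ZMod.val_natCast, Nat.mod_eq_of_lt (by omega)]
      refine ⟨(t : ZMod (2 * k + 3)) + u, ?_, hval⟩
      rw [Finset.mem_filter, inCyclicOrder_three_iff, hval]
      exact ⟨Finset.mem_univ _, ht⟩
  rw [this, Nat.card_Ioo]; rfl

/-- The gap condition forces `a, b, c` to be positively ordered. -/
lemma gap_iff (k : ℕ) (a b c : ZMod (2 * k + 3)) (hca : c ≠ a) :
    (gapCard k a b ≤ k ∧ gapCard k b c ≤ k ∧ gapCard k c a ≤ k) ↔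
      ((b - a).val ≤ k + 1 ∧ k + 2 ≤ (c - a).val ∧ (c - a).val ≤ (b - a).val + k + 1) := by
  have hne : c - a ≠ 0 := sub_ne_zero.2 hca
  have h1 : (a - c).val = 2 * k + 3 - (c - a).val := by
    rw [← neg_sub, ZMod.neg_val, if_neg hne]
  have h2 := ZMod.val_lt (c - a)
  rw [gapCard_eq, gapCard_eq, gapCard_eq, h1]
  by_cases h : (b - a).val ≤ (c - a).val
  · have h3 : (c - b).val = (c - a).val - (b - a).val := by
      rw [← ZMod.val_sub h]; congr 1; ring
    rw [h3]; omega
  · omega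

lemma prod_neg_one_range {n t : ℕ} (ht : t ≤ n) :
    ∏ z ∈ Finset.range n, (if z < t then (-1 : ℤ) else 1) = (-1) ^ t := by
  rw [Finset.prod_ite, Finset.prod_const, Finset.prod_const_one, mul_one]
  congr 1
  have : (Finset.range n).filter (· < t) = Finset.range t := by
    ext z; simp; omega
  rw [this, Finset.card_range]

lemma prod_zmod (n : ℕ) [NeZero n] {M : Type*} [CommMonoid M] (f : ℕ → M) :
    ∏ z : ZMod n, f z.val = ∏ z ∈ Finset.range n, f z := by
  obtain ⟨m, rfl⟩ := Nat.exists_eq_succ_of_ne_zero (NeZero.ne n)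
  exact Fin.prod_univ_eq_prod_range f (m + 1)

/-- Since the values of `e` exhaust `ℤ/n`, exactly `t` of the residues `e i - e 0`
are less than `t`. -/
lemma prod_full (k : ℕ) (e : Fin (2 * k + 3) → ZMod (2 * k + 3)) (he : Function.Bijective e)
    {t : ℕ} (ht : t ≤ 2 * k + 3) :
    ∏ i, (if (e i - e 0).val < t then (-1 : ℤ) else 1) = (-1) ^ t := by
  rw [← prod_neg_one_range ht, ← prod_zmod (2 * k + 3) (fun z => if z < t then (-1 : ℤ) else 1)]
  exact Fintype.prod_bijective (fun i => e i - e 0)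
    ((Equiv.subRight (e 0)).bijective.comp he) _ _ (fun _ => rfl)

/-- The contribution of an enumeration depends only on the parities of the gaps:
with `x = a₂ - a₁` and `y = a₃ - a₁` the gaps are `x - 1`, `y - x - 1` and `2k + 2 - y`. -/
lemma summand_eq (k : ℕ) (e : Fin (2 * k + 3) → ZMod (2 * k + 3)) (he : Function.Bijective e)
    (hlt : (e 1 - e 0).val < (e 2 - e 0).val) :
    cycSign (2 * k + 3) e * ∑ i : Fin 3, cycSign (2 * k + 3) (aTuple k e i)
      = (-1) ^ ((e 1 - e 0).val + (e 2 - e 0).val + 1) + (-1) ^ (e 2 - e 0).val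
        + (-1) ^ ((e 1 - e 0).val + 1) := by
  set A : Fin (2 * k + 3) → ℤ := fun j => ((e j - e 0).val : ℤ) with hA
  set v : Fin (2 * k + 3) → ℤ := fun j => A j + (e 0).val with hv
  have hAlt : ∀ i j, A i < A j + ((2 * k + 3 : ℕ) : ℤ) := by
    intro i j
    have := ZMod.val_lt (e i - e 0)
    simp only [hA]; omega
  have hvw : ∀ i j, v i < v j + ((2 * k + 3 : ℕ) : ℤ) := by
    intro i j
    have := hAlt i j
    simp only [hv]; linarith
  have hAinj : Function.Injective A := by
    intro i j h
    simp only [hA, Nat.cast_inj] at h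
    have := ZMod.val_injective _ h
    exact he.1 (by simpa using this)
  have hvinj : Function.Injective v := fun i j h => hAinj (by simpa [hv] using h)
  have hvx : ∀ i, ((v i : ℤ) : ZMod (2 * k + 3)) = e i := by
    intro i; simp [hv, hA]
  have hodd : Odd (2 * k + 1) := ⟨k, rfl⟩
  -- the positions of the `b`s
  let β : Fin (2 * k) → Fin (2 * k + 3) := fun j => j.succ.succ.succ
  have h0 : cycSign (2 * k + 3) e = altSign v :=
    cycSign_eq ⟨k + 1, by ring⟩ _ _ v hvx hvw hvinj
  -- the lift of the `i`-th subtuple is a subtuple of `v`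
  have hsub : ∀ p : Fin 3, cycSign (2 * k + 3) (aTuple k e p)
      = altSign (Fin.cons (v ⟨p, by omega⟩) (fun j => v (β j)) : Fin (2 * k + 1) → ℤ) := by
    intro p
    have hc : (Fin.cons (v ⟨p, by omega⟩) (fun j => v (β j)) : Fin (2 * k + 1) → ℤ)
        = v ∘ (Fin.cons ⟨p, by omega⟩ β : Fin (2 * k + 1) → Fin (2 * k + 3)) := by
      funext j
      refine Fin.cases ?_ (fun j => ?_) j <;> simp
    rw [hc]
    refine cycSign_eq hodd _ _ _ ?_ (fun i j => hvw _ _) (hvinj.comp ?_)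
    · intro j
      rw [Function.comp_apply, hvx]
      refine Fin.cases ?_ (fun j => ?_) j
      · simp [aTuple]
      · simp only [aTuple, Fin.cons_succ, Fin.val_succ, Nat.add_eq_zero_iff, one_ne_zero, and_false,
          if_false]
        rfl
    · rw [Fin.cons_injective_iff]
      constructor
      · rintro ⟨j, hj⟩
        have := congrArg Fin.val hj
        simp [β] at this
        omega
      · intro i j h
        simpa [β] using h
  -- expand everything into signs of differences
  have hexp : altSign v = ((v 1 - v 0).sign * ((v 2 - v 0).sign * ∏ j, (v (β j) - v 0).sign)) *
      (((v 2 - v 1).sign * ∏ j, (v (β j) - v 1).sign) *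
        ((∏ j, (v (β j) - v 2).sign) * altSign (fun j => v (β j)))) := by
    rw [altSign_succ, altSign_succ, altSign_succ, Fin.prod_univ_succ, Fin.prod_univ_succ,
      Fin.prod_univ_succ]
    rfl
  have hexp' : ∀ a : ℤ, altSign (Fin.cons a (fun j => v (β j)) : Fin (2 * k + 1) → ℤ)
      = (∏ j, (v (β j) - a).sign) * altSign (fun j => v (β j)) := by
    intro a
    rw [altSign_succ]
    simp
  have hA0 : A 0 = 0 := by simp [hA]
  have hA1 : 0 < A 1 := by
    have h : A 1 ≠ A 0 := fun h => by have := hAinj h; simp at this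
    have h' : 0 ≤ A 1 := Nat.cast_nonneg _
    rw [hA0] at h; omega
  have hA12 : A 1 < A 2 := Nat.cast_lt.2 hlt
  have hs : ∀ a b, v a - v b = A a - A b := fun a b => by simp [hv]
  have hposs : ∀ j, 0 < A (β j) := by
    intro j
    have h : A (β j) ≠ A 0 := fun h => by have := hAinj h; simp [β, Fin.ext_iff] at this
    have h' : 0 ≤ A (β j) := Nat.cast_nonneg _
    rw [hA0] at h; omega
  have hβ1 : ∀ j, A (β j) ≠ A 1 := fun j h => by
    have := hAinj h; simp [β, Fin.ext_iff] at this
  have hβ2 : ∀ j, A (β j) ≠ A 2 := fun j h => by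
    have := congrArg Fin.val (hAinj h)
    change (j : ℕ) + 1 + 1 + 1 = 2 % (2 * k + 3) at this
    rw [Nat.mod_eq_of_lt (by omega)] at this
    omega
  have hp0 : ∏ j, (v (β j) - v 0).sign = 1 := by
    refine Finset.prod_eq_one fun j _ => ?_
    rw [hs, hA0, sub_zero, Int.sign_eq_one_of_pos (hposs j)]
  have hsg : ∀ a b : Fin (2 * k + 3), A a ≠ A b →
      (v a - v b).sign = if (e a - e 0).val < (e b - e 0).val then (-1 : ℤ) else 1 := by
    intro a b hab
    rw [hs]
    split_ifs with h
    · exact Int.sign_eq_neg_one_of_neg (by simp only [hA]; omega)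
    · refine Int.sign_eq_one_of_pos ?_
      simp only [hA] at hab ⊢
      omega
  have hp1 : ∏ j, (v (β j) - v 1).sign = (-1) ^ ((e 1 - e 0).val + 1) := by
    have hf := prod_full k e he (ZMod.val_lt (e 1 - e 0)).le
    rw [Fin.prod_univ_succ, Fin.prod_univ_succ, Fin.prod_univ_succ] at hf
    have h1 : (e 0 - e 0).val < (e 1 - e 0).val := by
      rw [sub_self, ZMod.val_zero]; exact Nat.cast_pos.1 hA1
    rw [if_pos h1] at hf
    have h2 : ¬ (e (Fin.succ 0) - e 0).val < (e 1 - e 0).val := lt_irrefl _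
    have h3 : ¬ (e (Fin.succ (Fin.succ 0)) - e 0).val < (e 1 - e 0).val := hlt.le.not_gt
    rw [if_neg h2, if_neg h3] at hf
    rw [Finset.prod_congr rfl fun j _ => hsg (β j) 1 (hβ1 j), pow_succ, ← hf]
    simp only [β]; ring
  have hp2 : ∏ j, (v (β j) - v 2).sign = (-1) ^ ((e 2 - e 0).val) := by
    have hf := prod_full k e he (ZMod.val_lt (e 2 - e 0)).le
    rw [Fin.prod_univ_succ, Fin.prod_univ_succ, Fin.prod_univ_succ] at hf
    have h1 : (e 0 - e 0).val < (e 2 - e 0).val := by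
      rw [sub_self, ZMod.val_zero]; exact (Nat.cast_pos.1 hA1).trans hlt
    rw [if_pos h1] at hf
    have h2 : (e (Fin.succ 0) - e 0).val < (e 2 - e 0).val := hlt
    have h3 : ¬ (e (Fin.succ (Fin.succ 0)) - e 0).val < (e 2 - e 0).val := lt_irrefl _
    rw [if_pos h2, if_neg h3] at hf
    rw [Finset.prod_congr rfl fun j _ => hsg (β j) 2 (hβ2 j), ← hf]
    simp only [β]; ring
  have hβinj : Function.Injective (fun j => v (β j)) :=
    hvinj.comp fun i j h => by simpa [β] using h
  have hsq := altSign_mul_self _ hβinj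
  have hs1 : (v 1 - v 0).sign = 1 := Int.sign_eq_one_of_pos (by rw [hs]; linarith)
  have hs2 : (v 2 - v 0).sign = 1 := Int.sign_eq_one_of_pos (by rw [hs]; linarith)
  have hs3 : (v 2 - v 1).sign = 1 := Int.sign_eq_one_of_pos (by rw [hs]; linarith)
  have e0 : v ⟨((0 : Fin 3) : ℕ), by omega⟩ = v 0 := rfl
  have e1 : v ⟨((1 : Fin 3) : ℕ), by omega⟩ = v 1 := rfl
  have e2 : v ⟨((2 : Fin 3) : ℕ), by omega⟩ = v 2 := rfl
  rw [h0, Fin.sum_univ_three, hsub, hsub, hsub, hexp, hexp', hexp', hexp', e0, e1, e2, hp0, hp1,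
    hp2, hs1, hs2, hs3]
  set S := altSign (fun j => v (β j))
  have hx : ((-1 : ℤ) ^ (e 1 - e 0).val) ^ 2 = 1 := by rw [← pow_mul, mul_comm, pow_mul]; simp
  have hy : ((-1 : ℤ) ^ (e 2 - e 0).val) ^ 2 = 1 := by rw [← pow_mul, mul_comm, pow_mul]; simp
  simp only [pow_add, pow_one]
  generalize (-1 : ℤ) ^ (e 1 - e 0).val = X at *
  generalize (-1 : ℤ) ^ (e 2 - e 0).val = Y at *
  linear_combination (-X * Y + X ^ 2 * Y - X * Y ^ 2) * hsq + Y * hx - X * hy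

/-- A bijection out of `3 + m` points is an injective choice of its first three values together
with one of the `m!` ways of distributing the remaining values. -/
lemma sum_bijective {α : Type*} [Fintype α] [DecidableEq α] (m : ℕ)
    (hα : Fintype.card α = m + 3) (f : α → α → α → ℚ) :
    (∑ e : Fin (m + 3) → α, open Classical in
        if Function.Bijective e then f (e 0) (e 1) (e 2) else 0)
      = (m.factorial : ℚ) * ∑ a : Fin 3 → α, open Classical in
          if Function.Injective a then f (a 0) (a 1) (a 2) else 0 := by
  classical
  let ι : Fin 3 ⊕ Fin m ≃ Fin (m + 3) := finSumFinEquiv.trans (finCongr (by omega))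
  have hbij : ∀ e : Fin (m + 3) → α, Function.Bijective e ↔ Function.Injective e := fun e => by
    rw [Fintype.bijective_iff_injective_and_card]; simp [hα]
  have hembed : ∀ (κ : Type) [Fintype κ] [DecidableEq κ] (g : (κ → α) → ℚ),
      (∑ e : κ → α, if Function.Injective e then g e else 0) = ∑ e : κ ↪ α, g e := by
    intro κ _ _ g
    rw [← Finset.sum_filter]
    rw [← Fintype.sum_equiv (Equiv.subtypeInjectiveEquivEmbedding κ α) (fun e => g e.1) _
      (fun e => rfl)]
    exact Finset.sum_subtype _ (by simp) _
  simp only [hbij]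
  rw [hembed (Fin (m + 3)) (fun e => f (e 0) (e 1) (e 2)),
    hembed (Fin 3) (fun e => f (e 0) (e 1) (e 2))]
  rw [Fintype.sum_equiv ((Equiv.embeddingCongr ι.symm (Equiv.refl α)).trans
    Equiv.sumEmbeddingEquivSigmaEmbeddingRestricted)
    (fun e : Fin (m + 3) ↪ α => f (e 0) (e 1) (e 2))
    (fun p => f (p.1 0) (p.1 1) (p.1 2)) (fun e => rfl)]
  rw [Fintype.sum_sigma, Finset.mul_sum]
  refine Finset.sum_congr rfl fun a _ => ?_
  simp only [Finset.sum_const, Finset.card_univ, nsmul_eq_mul]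
  congr 2
  rw [Fintype.card_embedding_eq]
  have : Fintype.card ↥(Set.range a)ᶜ = m := by
    rw [Fintype.card_compl_set, Set.card_range_of_injective a.injective, hα]; simp
  rw [this, Fintype.card_fin, Nat.descFactorial_self]

lemma sum_zmod (n : ℕ) [NeZero n] (f : ℕ → ℚ) :
    ∑ z : ZMod n, f z.val = ∑ z ∈ Finset.range n, f z := by
  obtain ⟨m, rfl⟩ := Nat.exists_eq_succ_of_ne_zero (NeZero.ne n)
  exact Fin.sum_univ_eq_sum_range f (m + 1)

/-- Triples of residues, recorded by the first entry and the displacements of the others. -/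
def tripleEquiv (n : ℕ) : (Fin 3 → ZMod n) ≃ ZMod n × ZMod n × ZMod n where
  toFun a := (a 0, a 1 - a 0, a 2 - a 0)
  invFun p := ![p.1, p.1 + p.2.1, p.1 + p.2.2]
  left_inv a := by funext i; fin_cases i <;> simp
  right_inv p := by simp

/-- Summing a function of the two displacements over all admissible enumerations: the first gap
is `g`, and the last entry is displaced by `k + 2 + j` with `0 ≤ j ≤ g`. -/
lemma sum_admissible (k : ℕ) (H : ℕ → ℕ → ℚ) :
    (∑ e : Fin (2 * k + 3) → ZMod (2 * k + 3), open Classical in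
        if Function.Bijective e ∧ gapCard k (e 0) (e 1) ≤ k ∧
            gapCard k (e 1) (e 2) ≤ k ∧ gapCard k (e 2) (e 0) ≤ k then
          H (e 1 - e 0).val (e 2 - e 0).val else 0)
      = ((2 * k).factorial : ℚ) * ((2 * k + 3) *
          ∑ g ∈ Finset.range (k + 1), ∑ j ∈ Finset.range (g + 1), H (g + 1) (k + 2 + j)) := by
  classical
  let C : ℕ → ℕ → Prop := fun x y => (x ≤ k + 1 ∧ k + 2 ≤ y ∧ y ≤ x + k + 1)
  let f : ZMod (2 * k + 3) → ZMod (2 * k + 3) → ZMod (2 * k + 3) → ℚ := fun a b c =>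
    if C (b - a).val (c - a).val then H (b - a).val (c - a).val else 0
  have step1 := sum_bijective (α := ZMod (2 * k + 3)) (2 * k) (ZMod.card _) f
  have step2 : (∑ a : Fin 3 → ZMod (2 * k + 3),
        if Function.Injective a then f (a 0) (a 1) (a 2) else 0)
      = ∑ p : ZMod (2 * k + 3) × ZMod (2 * k + 3) × ZMod (2 * k + 3),
        if 1 ≤ p.2.1.val ∧ C p.2.1.val p.2.2.val then H p.2.1.val p.2.2.val else 0 := by
    refine Fintype.sum_equiv (tripleEquiv _) _ _ fun a => ?_
    simp only [tripleEquiv, Equiv.coe_fn_mk, f]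
    by_cases hC : C (a 1 - a 0).val (a 2 - a 0).val
    · have hiff : Function.Injective a ↔ 1 ≤ (a 1 - a 0).val := by
        constructor
        · intro h
          rw [Nat.one_le_iff_ne_zero, Ne, ZMod.val_eq_zero, sub_eq_zero]
          exact fun h' => absurd (h h') (by decide)
        · intro h
          have h01 : a 0 ≠ a 1 := fun h' => by simp [h'] at h
          have h02 : a 0 ≠ a 2 := fun h' => by
            have := hC.2.1; simp [h'] at this
          have h12 : a 1 ≠ a 2 := fun h' => by
            have h1 := hC.2.1; have h2 := hC.1; rw [h'] at h2; omega
          intro i j hij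
          fin_cases i <;> fin_cases j <;> simp_all
      simp [hC, hiff]
    · simp [hC]
  have step3 : (∑ p : ZMod (2 * k + 3) × ZMod (2 * k + 3) × ZMod (2 * k + 3),
        if 1 ≤ p.2.1.val ∧ C p.2.1.val p.2.2.val then H p.2.1.val p.2.2.val else 0)
      = (2 * k + 3) * ∑ x ∈ Finset.range (2 * k + 3), ∑ y ∈ Finset.range (2 * k + 3),
        if 1 ≤ x ∧ C x y then H x y else 0 := by
    rw [Fintype.sum_prod_type]
    simp only [Finset.sum_const, Finset.card_univ, ZMod.card, nsmul_eq_mul]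
    rw [Fintype.sum_prod_type]
    push_cast
    congr 1
    rw [← sum_zmod (2 * k + 3)]
    refine Finset.sum_congr rfl fun x _ => ?_
    exact sum_zmod (2 * k + 3) (fun y => if 1 ≤ x.val ∧ C x.val y then H x.val y else 0)
  have step4 : (∑ x ∈ Finset.range (2 * k + 3), ∑ y ∈ Finset.range (2 * k + 3),
        if 1 ≤ x ∧ C x y then H x y else 0)
      = ∑ g ∈ Finset.range (k + 1), ∑ j ∈ Finset.range (g + 1), H (g + 1) (k + 2 + j) := by
    rw [← Finset.sum_product', ← Finset.sum_filter, Finset.sum_sigma']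
    symm
    refine Finset.sum_bij (fun p _ => (p.1 + 1, k + 2 + p.2)) ?_ ?_ ?_ ?_
    · rintro ⟨g, j⟩ h
      simp only [Finset.mem_sigma, Finset.mem_range, Finset.mem_filter, Finset.mem_product, C] at h ⊢
      omega
    · rintro ⟨g, j⟩ _ ⟨g', j'⟩ _ h
      simp only [Prod.mk.injEq] at h
      obtain ⟨h1, h2⟩ := h
      obtain rfl : g = g' := by omega
      obtain rfl : j = j' := by omega
      rfl
    · rintro ⟨x, y⟩ h
      simp only [Finset.mem_range, Finset.mem_filter, Finset.mem_product, C] at h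
      refine ⟨⟨x - 1, y - (k + 2)⟩, ?_, ?_⟩
      · simp only [Finset.mem_sigma, Finset.mem_range]; omega
      · simp only [Prod.mk.injEq]; omega
    · rintro ⟨g, j⟩ _; rfl
  rw [← step4, ← step3, ← step2, ← step1]
  refine Finset.sum_congr rfl fun e _ => ?_
  by_cases he : Function.Bijective e
  · have h20 : e 2 ≠ e 0 := fun h => fin_two_ne_zero _ (he.1 h)
    simp only [he, true_and, if_true, gap_iff k _ _ _ h20, f, C]
  · simp only [he, false_and, if_false]

lemma sum_alt (m : ℕ) :
    ∑ g ∈ Finset.range m, (-1 : ℚ) ^ g = (1 - (-1) ^ m) / 2 := by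
  induction m with
  | zero => simp
  | succ m ih => rw [Finset.sum_range_succ, ih, pow_succ]; ring

lemma sum_alt_mul (m : ℕ) :
    ∑ g ∈ Finset.range m, (-1 : ℚ) ^ g * (g + 1) = (1 - (-1) ^ m * (2 * m + 1)) / 4 := by
  induction m with
  | zero => simp
  | succ m ih => rw [Finset.sum_range_succ, ih, pow_succ]; push_cast; ring

lemma sum_count (m : ℕ) :
    ∑ g ∈ Finset.range m, ((g : ℚ) + 1) = m * (m + 1) / 2 := by
  induction m with
  | zero => simp
  | succ m ih => rw [Finset.sum_range_succ, ih]; push_cast; ring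

lemma sum_signs (k : ℕ) :
    ∑ g ∈ Finset.range (k + 1), ∑ j ∈ Finset.range (g + 1),
      ((-1 : ℚ) ^ (g + 1 + (k + 2 + j) + 1) + (-1) ^ (k + 2 + j) + (-1) ^ (g + 1 + 1))
      = if Odd k then -(3 / 2) * ((k : ℚ) + 1) else (3 / 2) * ((k : ℚ) + 2) := by
  have inner : ∀ g ∈ Finset.range (k + 1), ∑ j ∈ Finset.range (g + 1),
      ((-1 : ℚ) ^ (g + 1 + (k + 2 + j) + 1) + (-1) ^ (k + 2 + j) + (-1) ^ (g + 1 + 1))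
      = (-1) ^ k * (1 + (-1) ^ g) + (-1) ^ g * ((g : ℚ) + 1) := by
    intro g _
    have : ∀ j, ((-1 : ℚ) ^ (g + 1 + (k + 2 + j) + 1) + (-1) ^ (k + 2 + j) + (-1) ^ (g + 1 + 1))
        = ((-1) ^ g * (-1) ^ k + (-1) ^ k) * (-1) ^ j + (-1) ^ g := by
      intro j; simp only [pow_add]; ring
    simp only [this]
    rw [Finset.sum_add_distrib, ← Finset.mul_sum, sum_alt, Finset.sum_const, Finset.card_range,
      nsmul_eq_mul, pow_succ]
    have hg : ((-1 : ℚ) ^ g) ^ 2 = 1 := by rw [← pow_mul, mul_comm, pow_mul]; simp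
    push_cast
    linear_combination ((-1 : ℚ) ^ k / 2) * hg
  rw [Finset.sum_congr rfl inner, Finset.sum_add_distrib, ← Finset.mul_sum,
    Finset.sum_add_distrib, sum_alt, sum_alt_mul, pow_succ]
  simp only [Finset.sum_const, Finset.card_range, nsmul_eq_mul]
  split_ifs with h
  · rw [h.neg_one_pow]; push_cast; ring
  · rw [(Nat.not_odd_iff_even.1 h).neg_one_pow]; push_cast; ring

open Classical in
/-- Evaluation of the 0-cell cocycle on the half-sized Stasheff associahedron
`A_{2k+3}^{1/2}`: among the enumerations `(a₁,a₂,a₃,b₁,…,b_{2k})` of `ℤ/(2k+3)`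
for which each cyclic interval between consecutive `a`'s contains at most `k`
elements, there are `(2k+3)(k+1)(k+2)(2k)!/2` enumerations and the sum of
`sgn_c(a₁,a₂,a₃,b₁,…,b_{2k}) ⬝ Σ_{i=1}^{3} sgn_c(a_i,b₁,…,b_{2k})` over them is
`−(3/2)(2k+3)(k+1)(2k)!` for `k` odd and `(3/2)(2k+3)(k+2)(2k)!` for `k` even. -/
theorem half_associahedron_evaluation (k : ℕ) (hk : 1 ≤ k) :
    (((Finset.univ.filter fun e : Fin (2 * k + 3) → ZMod (2 * k + 3) =>
          Function.Bijective e ∧ gapCard k (e 0) (e 1) ≤ k ∧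
            gapCard k (e 1) (e 2) ≤ k ∧ gapCard k (e 2) (e 0) ≤ k).card : ℚ)
        = (2 * (k : ℚ) + 3) * ((k : ℚ) + 1) * ((k : ℚ) + 2) *
            (Nat.factorial (2 * k) : ℚ) / 2)
    ∧
    (∑ e : Fin (2 * k + 3) → ZMod (2 * k + 3),
        (if Function.Bijective e ∧ gapCard k (e 0) (e 1) ≤ k ∧
            gapCard k (e 1) (e 2) ≤ k ∧ gapCard k (e 2) (e 0) ≤ k then
          (cycSign (2 * k + 3) e : ℚ) *
            ∑ i : Fin 3, (cycSign (2 * k + 3) (aTuple k e i) : ℚ)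
        else 0)
      = if Odd k then
          -(3 / 2) * (2 * (k : ℚ) + 3) * ((k : ℚ) + 1) * (Nat.factorial (2 * k) : ℚ)
        else
          (3 / 2) * (2 * (k : ℚ) + 3) * ((k : ℚ) + 2) * (Nat.factorial (2 * k) : ℚ)) := by
  constructor
  · have h := sum_admissible k (fun _ _ => 1)
    rw [Finset.card_filter]
    push_cast
    rw [h]
    simp only [Finset.sum_const, Finset.card_range, nsmul_eq_mul, mul_one]
    push_cast
    rw [sum_count]
    push_cast
    ring
  · have h := sum_admissible k
      (fun x y => (-1 : ℚ) ^ (x + y + 1) + (-1) ^ y + (-1) ^ (x + 1))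
    rw [sum_signs] at h
    refine Eq.trans (Finset.sum_congr rfl fun e _ => ?_) (h.trans ?_)
    · refine if_ctx_congr Iff.rfl (fun hc => ?_) (fun _ => rfl)
      obtain ⟨he, hg⟩ := hc
      have h20 : e 2 ≠ e 0 := fun h => fin_two_ne_zero _ (he.1 h)
      rw [gap_iff k _ _ _ h20] at hg
      have hs := summand_eq k e he (by omega)
      exact_mod_cast hs
    · split_ifs <;> ring
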